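/- Assume the growth conditions (GC) and the compactness-continuity conditions (CC), and let v* be the unique lower semicontinuous function with ‖v*‖_W < ∞ satisfying v* = T v*. Then: (i) for every measurable selector f, v* ≤ V_f pointwise; (ii) a measurable selector f satisfies V_f = v* if and only if T v* = T_f v* (i.e. v*(x) = C(x,f(x)) + α ∫_X v*(y) Q(dy|x,f(x)) for all x); and (iii) there exists a measurable selector f* with T v* = T_{f*} v*, hence V_{f*} = v*, so v*(x) = min over measurable selectors f of V_f(x) for every x ∈ X. -/

import Mathlib

open MeasureTheory ProbabilityTheory Filter Topology
open scoped ENNReal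

/-- The weighted norm `‖u‖_W = sup_x |u x| / W x`, valued in `ℝ≥0∞`. -/
noncomputable def WNorm {X : Type*} (W u : X → ℝ) : ℝ≥0∞ :=
  ⨆ x, ENNReal.ofReal (|u x| / W x)

/-- The dynamic programming (Bellman) operator
`Tu(x) = inf_{a ∈ A(x)} [C(x,a) + α ∫ u dQ(·|x,a)]`. -/
noncomputable def Tbell {X A : Type*} [MeasurableSpace X] [MeasurableSpace A]
    (Adm : X → Set A) (Q : Kernel (X × A) X) (C : X × A → ℝ) (α : ℝ)
    (u : X → ℝ) (x : X) : ℝ :=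
  sInf ((fun a => C (x, a) + α * ∫ y, u y ∂(Q (x, a))) '' Adm x)

theorem argmin_step {X A : Type*} [MeasurableSpace X] [TopologicalSpace A] [T2Space A]
    (G : X → Set A) (h : X → A → ℝ) (hc : ∀ x, IsCompact (G x)) (hne : ∀ x, (G x).Nonempty)
    (hl : ∀ x, LowerSemicontinuousOn (h x) (G x))
    (hm : ∀ B : Set A, IsClosed B → ∀ q : ℝ, MeasurableSet {x | ∃ a ∈ G x, a ∈ B ∧ h x a ≤ q}) :
    (∀ x, IsCompact {a | a ∈ G x ∧ ∀ b ∈ G x, h x a ≤ h x b}) ∧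
    (∀ x, {a | a ∈ G x ∧ ∀ b ∈ G x, h x a ≤ h x b}.Nonempty) ∧
    ∀ B : Set A, IsClosed B →
      MeasurableSet {x | ∃ a ∈ {a | a ∈ G x ∧ ∀ b ∈ G x, h x a ≤ h x b}, a ∈ B} := by
  have hmin : ∀ x, ∃ m ∈ G x, ∀ b ∈ G x, h x m ≤ h x b := by
    intro x
    obtain ⟨m, hm1, hm2⟩ := (hl x).exists_isMinOn (hne x) (hc x)
    exact ⟨m, hm1, fun b hb => hm2 hb⟩
  refine ⟨fun x => ?_, fun x => ?_, fun B hB => ?_⟩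
  · obtain ⟨m, hm1, hm2⟩ := hmin x
    have : {a | a ∈ G x ∧ ∀ b ∈ G x, h x a ≤ h x b} = G x ∩ h x ⁻¹' Set.Iic (h x m) := by
      ext a
      constructor
      · rintro ⟨h1, h2⟩
        exact ⟨h1, h2 m hm1⟩
      · rintro ⟨h1, h2⟩
        exact ⟨h1, fun b hb => le_trans h2 (hm2 b hb)⟩
    rw [this]
    exact (hl x).isCompact_inter_preimage_Iic (hc x) _
  · obtain ⟨m, hm1, hm2⟩ := hmin x
    exact ⟨m, hm1, hm2⟩
  · have : {x | ∃ a ∈ {a | a ∈ G x ∧ ∀ b ∈ G x, h x a ≤ h x b}, a ∈ B} =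
        ⋂ q : ℚ, ({x | ∃ a ∈ G x, a ∈ Set.univ ∧ h x a ≤ (q : ℝ)}ᶜ ∪
          {x | ∃ a ∈ G x, a ∈ B ∧ h x a ≤ (q : ℝ)}) := by
      ext x
      simp only [Set.mem_iInter, Set.mem_union, Set.mem_compl_iff, Set.mem_setOf_eq,
        Set.mem_univ, true_and]
      constructor
      · rintro ⟨a, ⟨h1, h2⟩, h3⟩ q
        by_cases hq : ∃ b ∈ G x, h x b ≤ (q : ℝ)
        · obtain ⟨b, hb, hbq⟩ := hq
          exact Or.inr ⟨a, h1, h3, (h2 b hb).trans hbq⟩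
        · exact Or.inl hq
      · intro H
        obtain ⟨m, hm1, hm2⟩ := hmin x
        have H' : ∀ q : ℚ, h x m < q → ∃ a ∈ G x, a ∈ B ∧ h x a ≤ (q : ℝ) := by
          intro q hq
          rcases H q with h1 | h1
          · exact absurd ⟨m, hm1, hq.le⟩ h1
          · exact h1
        obtain ⟨q0, hq0⟩ := exists_rat_gt (h x m)
        obtain ⟨a0, ha0, ha0B, -⟩ := H' q0 hq0
        obtain ⟨b, hb1, hb2⟩ := ((hl x).mono Set.inter_subset_left).exists_isMinOn
          (⟨a0, ha0, ha0B⟩ : (G x ∩ B).Nonempty) ((hc x).inter_right hB)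
        refine ⟨b, ⟨hb1.1, fun c hc' => ?_⟩, hb1.2⟩
        refine le_trans ?_ (hm2 c hc')
        by_contra hlt
        push Not at hlt
        obtain ⟨q, hq1, hq2⟩ := exists_rat_btwn hlt
        obtain ⟨a, ha, haB, haq⟩ := H' q hq1
        have : h x b ≤ h x a := hb2 ⟨ha, haB⟩
        linarith
    rw [this]
    exact MeasurableSet.iInter fun q => (hm _ isClosed_univ _).compl.union (hm B hB _)

/-- Successive refinement of a compact-valued multifunction. -/
def refineSeq {X A : Type*} [MetricSpace A] (G : X → Set A) (d : ℕ → A) : ℕ → X → Set A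
  | 0 => G
  | n + 1 => fun x => {a | a ∈ refineSeq G d n x ∧ ∀ b ∈ refineSeq G d n x,
      dist a (d n) ≤ dist b (d n)}

theorem compact_selection {X A : Type*} [MeasurableSpace X] [MetricSpace A]
    [TopologicalSpace.SeparableSpace A] [MeasurableSpace A] [BorelSpace A]
    (G : X → Set A) (hc : ∀ x, IsCompact (G x)) (hne : ∀ x, (G x).Nonempty)
    (hm : ∀ B : Set A, IsClosed B → MeasurableSet {x | ∃ a ∈ G x, a ∈ B}) :
    ∃ f : X → A, Measurable f ∧ ∀ x, f x ∈ G x := by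
  rcases isEmpty_or_nonempty X with hX | ⟨⟨x0⟩⟩
  · exact ⟨fun x => hX.elim x, measurable_of_empty _, fun x => hX.elim x⟩
  haveI : Nonempty A := ⟨(hne x0).some⟩
  set d := TopologicalSpace.denseSeq A with hd
  have key : ∀ n, (∀ x, IsCompact (refineSeq G d n x)) ∧ (∀ x, (refineSeq G d n x).Nonempty) ∧
      ∀ B : Set A, IsClosed B → MeasurableSet {x | ∃ a ∈ refineSeq G d n x, a ∈ B} := by
    intro n
    induction n with
    | zero => exact ⟨hc, hne, hm⟩
    | succ n ih =>
      obtain ⟨h1, h2, h3⟩ := ih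
      refine argmin_step (refineSeq G d n) (fun _ a => dist a (d n)) h1 h2 ?_ ?_
      · intro x
        exact (by fun_prop : Continuous fun a => dist a (d n)).continuousOn.lowerSemicontinuousOn
      · intro B hB q
        exact h3 (B ∩ Metric.closedBall (d n) q) (hB.inter Metric.isClosed_closedBall)
  have hanti : ∀ x n, refineSeq G d (n + 1) x ⊆ refineSeq G d n x := fun x n a ha => ha.1
  have huniq : ∀ x a b, (∀ n, a ∈ refineSeq G d n x) → (∀ n, b ∈ refineSeq G d n x) → a = b := by
    intro x a b ha hb
    have hdist : ∀ n, dist a (d n) = dist b (d n) := fun n =>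
      le_antisymm ((ha (n + 1)).2 b (hb n)) ((hb (n + 1)).2 a (ha n))
    have hcont : (fun y => dist a y) = fun y => dist b y :=
      Continuous.ext_on (TopologicalSpace.denseRange_denseSeq A) (by fun_prop) (by fun_prop)
        (by rintro _ ⟨n, rfl⟩; exact hdist n)
    have := congrFun hcont b
    simpa using this
  have hex : ∀ x, ∃ a, ∀ n, a ∈ refineSeq G d n x := by
    intro x
    obtain ⟨a, ha⟩ := IsCompact.nonempty_iInter_of_sequence_nonempty_isCompact_isClosed
      (fun n => refineSeq G d n x) (hanti x) (fun n => (key n).2.1 x) ((key 0).1 x)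
      (fun n => ((key n).1 x).isClosed)
    exact ⟨a, fun n => Set.mem_iInter.1 ha n⟩
  choose f hf using hex
  refine ⟨f, measurable_of_isClosed fun B hB => ?_, fun x => hf x 0⟩
  have : f ⁻¹' B = ⋂ n, {x | ∃ a ∈ refineSeq G d n x, a ∈ B} := by
    ext x
    simp only [Set.mem_preimage, Set.mem_iInter, Set.mem_setOf_eq]
    constructor
    · intro h n
      exact ⟨f x, hf x n, h⟩
    · intro h
      obtain ⟨a, ha⟩ := IsCompact.nonempty_iInter_of_sequence_nonempty_isCompact_isClosed
        (fun n => refineSeq G d n x ∩ B) (fun n => Set.inter_subset_inter_left _ (hanti x n))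
        (fun n => h n) (((key 0).1 x).inter_right hB)
        (fun n => ((key n).1 x).isClosed.inter hB)
      have ha' := Set.mem_iInter.1 ha
      rw [huniq x (f x) a (hf x) (fun n => (ha' n).1)]
      exact (ha' 0).2
  rw [this]
  exact MeasurableSet.iInter fun n => (key n).2.2 B hB

theorem closed_sublevel {X A : Type*} [TopologicalSpace X] [TopologicalSpace A]
    (Adm : X → Set A) (hAcomp : ∀ x, IsCompact (Adm x))
    (hAusc : ∀ x, ∀ U : Set A, IsOpen U → Adm x ⊆ U → ∀ᶠ x' in 𝓝 x, Adm x' ⊆ U)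
    (h : X × A → ℝ) (hl : LowerSemicontinuousOn h {p : X × A | p.2 ∈ Adm p.1})
    (B : Set A) (hB : IsClosed B) (q : ℝ) :
    IsClosed {x | ∃ a ∈ Adm x, a ∈ B ∧ h (x, a) ≤ q} := by
  rw [← isOpen_compl_iff, isOpen_iff_mem_nhds]
  intro x hx
  have hev : ∀ᶠ z in 𝓝ˢ (({x} : Set X) ×ˢ Adm x),
      z.2 ∈ Adm z.1 → z.2 ∈ B → q < h z := by
    rw [eventually_nhdsSet_iff_forall]
    rintro ⟨x', a⟩ ⟨hx', ha⟩
    obtain rfl : x' = x := hx'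
    by_cases haB : a ∈ B
    · have hq : q < h (x', a) := by
        by_contra hcon
        exact hx ⟨a, ha, haB, not_lt.1 hcon⟩
      have := hl (x', a) ha q hq
      rw [eventually_nhdsWithin_iff] at this
      filter_upwards [this] with z hz h1 _ using hz h1
    · have : ∀ᶠ z : X × A in 𝓝 (x', a), z.2 ∈ Bᶜ :=
        continuous_snd.continuousAt.eventually (hB.isOpen_compl.mem_nhds haB)
      filter_upwards [this] with z hz _ h2 using absurd h2 hz
  rw [isCompact_singleton.nhdsSet_prod_eq (hAcomp x), nhdsSet_singleton] at hev
  obtain ⟨s, hs, t, ht, hst⟩ := Filter.eventually_prod_iff.1 hev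
  rw [eventually_nhdsSet_iff_exists] at ht
  obtain ⟨U, hU, hAU, hUt⟩ := ht
  filter_upwards [hs, hAusc x U hU hAU] with x' h1 h2
  rintro ⟨a, ha, haB, hle⟩
  exact absurd (hst h1 (hUt a (h2 ha)) ha haB) (not_lt.2 hle)

theorem lsc_approx {X : Type*} [MetricSpace X] (g : X → ℝ) (hg0 : ∀ x, 0 ≤ g x)
    (hg : LowerSemicontinuous g) :
    ∃ G : ℕ → X → ℝ, (∀ n, Continuous (G n)) ∧ (∀ n x, 0 ≤ G n x) ∧ (∀ n x, G n x ≤ n) ∧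
      (∀ n x, G n x ≤ g x) ∧ ∀ x, Tendsto (fun n => G n x) atTop (𝓝 (g x)) := by
  rcases isEmpty_or_nonempty X with hX | hX
  · exact ⟨fun _ x => hX.elim x, fun n => continuous_of_const (fun x => hX.elim x),
      fun _ x => hX.elim x, fun _ x => hX.elim x, fun _ x => hX.elim x, fun x => hX.elim x⟩
  have hpos : ∀ (n : ℕ) (x y : X), 0 ≤ min (g y) n + n * dist x y := fun n x y =>
    add_nonneg (le_min (hg0 y) (Nat.cast_nonneg n)) (by positivity)
  have hbdd : ∀ (n : ℕ) (x : X), BddBelow (Set.range fun y => min (g y) n + n * dist x y) :=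
    fun n x => ⟨0, by rintro _ ⟨y, rfl⟩; exact hpos n x y⟩
  have hle : ∀ (n : ℕ) (x : X), (⨅ y, (min (g y) n + n * dist x y)) ≤ min (g x) n := by
    intro n x
    refine (ciInf_le (hbdd n x) x).trans ?_
    simp
  refine ⟨fun n x => ⨅ y, (min (g y) n + n * dist x y), fun n => ?_, fun n x => ?_,
    fun n x => (hle n x).trans (min_le_right _ _), fun n x => (hle n x).trans (min_le_left _ _),
    fun x => ?_⟩
  · refine (LipschitzWith.of_le_add_mul (n : NNReal) fun x x' => ?_).continuous
    rw [← sub_le_iff_le_add]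
    refine le_ciInf fun y => ?_
    rw [sub_le_iff_le_add]
    refine (ciInf_le (hbdd n x) y).trans ?_
    have := dist_triangle x x' y
    have hn : (0 : ℝ) ≤ n := Nat.cast_nonneg n
    have := mul_le_mul_of_nonneg_left this hn
    simp only [NNReal.coe_natCast]
    linarith
  · exact le_ciInf fun y => hpos n x y
  · rw [tendsto_order]
    refine ⟨fun c hcx => ?_, fun c hcx => ?_⟩
    · obtain ⟨c', hc1, hc2⟩ := exists_between hcx
      obtain ⟨δ, hδ, hball⟩ := Metric.eventually_nhds_iff.1 (hg x c' hc2)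
      obtain ⟨N1, hN1⟩ := exists_nat_ge (g x)
      obtain ⟨N2, hN2⟩ := exists_nat_ge (g x / δ)
      filter_upwards [eventually_ge_atTop (max N1 N2)] with n hn
      refine lt_of_lt_of_le hc1 (le_ciInf fun y => ?_)
      have hn1 : g x ≤ n := hN1.trans (by exact_mod_cast (le_max_left _ _).trans hn)
      have hn2 : g x / δ ≤ n := hN2.trans (by exact_mod_cast (le_max_right _ _).trans hn)
      have hnn : (0 : ℝ) ≤ n := Nat.cast_nonneg n
      by_cases hy : dist y x < δ
      · have h1 : c' ≤ min (g y) n := le_min (hball hy).le (hc2.le.trans hn1)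
        have h2 : (0 : ℝ) ≤ n * dist x y := by positivity
        linarith
      · rw [dist_comm] at hy
        have h1 : (0 : ℝ) ≤ min (g y) n := le_min (hg0 y) hnn
        have h2 : g x ≤ n * δ := (div_le_iff₀ hδ).1 hn2
        have h3 : (n : ℝ) * δ ≤ n * dist x y := mul_le_mul_of_nonneg_left (not_lt.1 hy) hnn
        linarith
    · exact Eventually.of_forall fun n => ((hle n x).trans (min_le_left _ _)).trans_lt hcx

theorem lsc_integral {X P : Type*} [MetricSpace X] [MeasurableSpace X] [BorelSpace X]
    [TopologicalSpace P] [MeasurableSpace P] (Q : Kernel P X) [IsMarkovKernel Q] (K : Set P)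
    (hQweak : ∀ g : X → ℝ, Continuous g → (∃ b, ∀ y, |g y| ≤ b) →
      ContinuousOn (fun p => ∫ y, g y ∂(Q p)) K)
    (g : X → ℝ) (hg0 : ∀ x, 0 ≤ g x) (hg : LowerSemicontinuous g)
    (hint : ∀ p ∈ K, Integrable g (Q p)) :
    LowerSemicontinuousOn (fun p => ∫ y, g y ∂(Q p)) K := by
  obtain ⟨G, hGc, hG0, hGn, hGg, hGt⟩ := lsc_approx g hg0 hg
  have hGint : ∀ n, ∀ p ∈ K, Integrable (G n) (Q p) := fun n p hp =>
    (hint p hp).mono' (hGc n).measurable.aestronglyMeasurable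
      (Eventually.of_forall fun y => by
        rw [Real.norm_of_nonneg (hG0 n y)]; exact hGg n y)
  intro p hp t ht
  have hlim : Tendsto (fun n => ∫ y, G n y ∂(Q p)) atTop (𝓝 (∫ y, g y ∂(Q p))) :=
    tendsto_integral_of_dominated_convergence g
      (fun n => (hGc n).measurable.aestronglyMeasurable) (hint p hp)
      (fun n => Eventually.of_forall fun y => by
        rw [Real.norm_of_nonneg (hG0 n y)]; exact hGg n y)
      (Eventually.of_forall hGt)
  obtain ⟨n, hn⟩ := (hlim.eventually (lt_mem_nhds ht)).exists
  have hcont := hQweak (G n) (hGc n) ⟨n, fun y => by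
    rw [abs_of_nonneg (hG0 n y)]; exact hGn n y⟩ p hp
  filter_upwards [hcont.eventually (lt_mem_nhds hn), self_mem_nhdsWithin] with p' h1 h2
  exact h1.trans_le (integral_mono (hGint n p' h2) (hint p' h2) (hGg n))

theorem wnorm_bound {X : Type*} (W u : X → ℝ) (hW1 : ∀ x, 1 ≤ W x) (hu : WNorm W u < ⊤) :
    ∃ c : ℝ, 0 ≤ c ∧ ∀ x, |u x| ≤ c * W x := by
  refine ⟨(WNorm W u).toReal, ENNReal.toReal_nonneg, fun x => ?_⟩
  have hW : 0 < W x := lt_of_lt_of_le one_pos (hW1 x)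
  rw [← div_le_iff₀ hW]
  have h1 : ENNReal.ofReal (|u x| / W x) ≤ WNorm W u :=
    le_iSup (fun x => ENNReal.ofReal (|u x| / W x)) x
  exact (ENNReal.ofReal_le_iff_le_toReal hu.ne).1 h1

theorem contraction_nonpos {X : Type*} [MeasurableSpace X] (W : X → ℝ)
    (μ : X → Measure X) (α β : ℝ) (hα0 : 0 < α) (hβ : 0 < β) (hγ : α * β < 1)
    (hWi : ∀ x, Integrable W (μ x)) (hWb : ∀ x, ∫ y, W y ∂(μ x) ≤ β * W x)
    (d : X → ℝ) (c : ℝ) (hc : 0 ≤ c) (hd : ∀ x, d x ≤ c * W x) (hdi : ∀ x, Integrable d (μ x))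
    (hstep : ∀ x, d x ≤ α * ∫ y, d y ∂(μ x)) : ∀ x, d x ≤ 0 := by
  have key : ∀ n : ℕ, ∀ x, d x ≤ c * (α * β) ^ n * W x := by
    intro n
    induction n with
    | zero => simpa using hd
    | succ n ih =>
      intro x
      have h1 : ∫ y, d y ∂(μ x) ≤ ∫ y, c * (α * β) ^ n * W y ∂(μ x) :=
        integral_mono (hdi x) ((hWi x).const_mul _) ih
      rw [integral_const_mul] at h1
      have h0 : 0 ≤ c * (α * β) ^ n := by positivity
      have h2 := h1.trans (mul_le_mul_of_nonneg_left (hWb x) h0)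
      calc d x ≤ α * ∫ y, d y ∂(μ x) := hstep x
        _ ≤ α * (c * (α * β) ^ n * (β * W x)) := mul_le_mul_of_nonneg_left h2 hα0.le
        _ = c * (α * β) ^ (n + 1) * W x := by ring
  intro x
  have ht : Tendsto (fun n : ℕ => c * (α * β) ^ n * W x) atTop (𝓝 (c * 0 * W x)) :=
    ((tendsto_pow_atTop_nhds_zero_of_lt_one (by positivity) hγ).const_mul c).mul_const _
  have := ge_of_tendsto' ht (fun n => key n x)
  simpa using this

/-- Under (GC) and (CC), with `v*` the lower semicontinuous fixed point of `T` of
finite `W`-norm: (i) `v* ≤ V_f` for every measurable selector `f`; (ii) a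
measurable selector `f` satisfies `V_f = v*` iff `T v* = T_f v*`; (iii) there is
a measurable selector `f*` with `T v* = T_{f*} v*` (hence `V_{f*} = v*`, so `v*`
is the minimum of the `V_f` over measurable selectors). -/
theorem optimal_selector_characterization {X A : Type*}
    [MetricSpace X] [PolishSpace X] [MeasurableSpace X] [BorelSpace X]
    [MetricSpace A] [PolishSpace A] [MeasurableSpace A] [BorelSpace A]
    (Adm : X → Set A) (hAne : ∀ x, (Adm x).Nonempty)
    (hKmeas : MeasurableSet {p : X × A | p.2 ∈ Adm p.1})
    (Q : Kernel (X × A) X) [IsMarkovKernel Q]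
    (C : X × A → ℝ) (hCmeas : Measurable C)
    (α : ℝ) (hα0 : 0 < α) (hα1 : α < 1)
    (M β : ℝ) (hM : 0 < M) (hβ : 1 < β)
    (W : X → ℝ) (hWmeas : Measurable W) (hW1 : ∀ x, 1 ≤ W x)
    (hCW : ∀ x, ∀ a ∈ Adm x, |C (x, a)| ≤ M * W x)
    (hQW : ∀ x, ∀ a ∈ Adm x,
      ∫⁻ y, ENNReal.ofReal (W y) ∂(Q (x, a)) ≤ ENNReal.ofReal (β * W x))
    (hγ : α * β < 1)
    (hAcomp : ∀ x, IsCompact (Adm x))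
    (hAusc : ∀ x, ∀ U : Set A, IsOpen U → Adm x ⊆ U → ∀ᶠ x' in 𝓝 x, Adm x' ⊆ U)
    (hClsc : LowerSemicontinuousOn C {p : X × A | p.2 ∈ Adm p.1})
    (hQweak : ∀ g : X → ℝ, Continuous g → (∃ b, ∀ y, |g y| ≤ b) →
      ContinuousOn (fun p : X × A => ∫ y, g y ∂(Q p)) {p : X × A | p.2 ∈ Adm p.1})
    (hWcont : Continuous W)
    (hQWcont : ContinuousOn (fun p : X × A => ∫ y, W y ∂(Q p))
      {p : X × A | p.2 ∈ Adm p.1})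
    (vstar : X → ℝ) (hvstarlsc : LowerSemicontinuous vstar)
    (hvstarW : WNorm W vstar < ⊤)
    (hvstarfix : ∀ x, vstar x = Tbell Adm Q C α vstar x) :
    (∀ f : X → A, Measurable f → (∀ x, f x ∈ Adm x) →
      ∀ Vf : X → ℝ, Measurable Vf → WNorm W Vf < ⊤ →
        (∀ x, Vf x = C (x, f x) + α * ∫ y, Vf y ∂(Q (x, f x))) →
        ∀ x, vstar x ≤ Vf x) ∧
    (∀ f : X → A, Measurable f → (∀ x, f x ∈ Adm x) →
      ∀ Vf : X → ℝ, Measurable Vf → WNorm W Vf < ⊤ →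
        (∀ x, Vf x = C (x, f x) + α * ∫ y, Vf y ∂(Q (x, f x))) →
        (Vf = vstar ↔
          ∀ x, vstar x = C (x, f x) + α * ∫ y, vstar y ∂(Q (x, f x)))) ∧
    ∃ fstar : X → A, Measurable fstar ∧ (∀ x, fstar x ∈ Adm x) ∧
      ∀ x, vstar x = C (x, fstar x) + α * ∫ y, vstar y ∂(Q (x, fstar x)) := by
  set K : Set (X × A) := {p : X × A | p.2 ∈ Adm p.1} with hK
  have hW0 : ∀ x, 0 ≤ W x := fun x => zero_le_one.trans (hW1 x)
  have hWi : ∀ p ∈ K, Integrable W (Q p) := by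
    rintro ⟨x, a⟩ hp
    refine ⟨hWmeas.aestronglyMeasurable, ?_⟩
    rw [hasFiniteIntegral_iff_ofReal (Eventually.of_forall hW0)]
    exact (hQW x a hp).trans_lt ENNReal.ofReal_lt_top
  have hWb : ∀ x, ∀ a ∈ Adm x, ∫ y, W y ∂(Q (x, a)) ≤ β * W x := by
    intro x a ha
    rw [integral_eq_lintegral_of_nonneg_ae (Eventually.of_forall hW0)
      hWmeas.aestronglyMeasurable]
    exact ENNReal.toReal_le_of_le_ofReal (mul_nonneg (by linarith) (hW0 x)) (hQW x a ha)
  have hbi : ∀ u : X → ℝ, Measurable u → ∀ c : ℝ, (∀ x, |u x| ≤ c * W x) →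
      ∀ p ∈ K, Integrable u (Q p) := fun u hu c hc p hp =>
    ((hWi p hp).const_mul c).mono' hu.aestronglyMeasurable (Eventually.of_forall hc)
  obtain ⟨c, hc0, hc⟩ := wnorm_bound W vstar hW1 hvstarW
  have hvm : Measurable vstar := hvstarlsc.measurable
  have hvi := hbi vstar hvm c hc
  -- lower semicontinuity of the objective
  set h : X × A → ℝ := fun p => C p + α * ∫ y, vstar y ∂(Q p) with hh
  have hlsc : LowerSemicontinuousOn h K := by
    have h1 : LowerSemicontinuousOn (fun p => ∫ y, (vstar y + c * W y) ∂(Q p)) K := by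
      refine lsc_integral Q K hQweak _ (fun x => ?_) ?_ ?_
      · have := neg_le_of_abs_le (hc x)
        linarith
      · exact hvstarlsc.add (continuous_const.mul hWcont).lowerSemicontinuous
      · exact fun p hp => (hvi p hp).add ((hWi p hp).const_mul c)
    have h2 : LowerSemicontinuousOn (fun p => α * ∫ y, (vstar y + c * W y) ∂(Q p)) K :=
      (continuous_const_mul α).comp_lowerSemicontinuousOn h1
        (fun a b hab => mul_le_mul_of_nonneg_left hab hα0.le)
    have h3 : LowerSemicontinuousOn (fun p => -(α * c) * ∫ y, W y ∂(Q p)) K :=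
      (hQWcont.const_mul _).lowerSemicontinuousOn
    have h4 := (hClsc.add h2).add h3
    have heq : ∀ p ∈ K, C p + α * ∫ y, (vstar y + c * W y) ∂(Q p) +
        -(α * c) * ∫ y, W y ∂(Q p) = h p := by
      intro p hp
      rw [integral_add (hvi p hp) ((hWi p hp).const_mul c), integral_const_mul, hh]
      ring
    intro p hp t ht
    have := h4 p hp t (by simpa only [heq p hp] using ht)
    filter_upwards [this, self_mem_nhdsWithin] with p' hp' hp'K
    simpa only [heq p' hp'K] using hp'
  have hlscx : ∀ x, LowerSemicontinuousOn (fun a => h (x, a)) (Adm x) := by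
    intro x a ha t ht
    have := hlsc (x, a) ha t ht
    have hcx : Tendsto (fun a : A => (x, a)) (𝓝[Adm x] a) (𝓝[K] (x, a)) :=
      tendsto_nhdsWithin_of_tendsto_nhds_of_eventually_within _
        ((Continuous.prodMk_right x).continuousAt.tendsto.mono_left nhdsWithin_le_nhds)
        (by filter_upwards [self_mem_nhdsWithin] with b hb using hb)
    exact hcx.eventually this
  have hmin : ∀ x, ∀ a ∈ Adm x, (∀ b ∈ Adm x, h (x, a) ≤ h (x, b)) → vstar x = h (x, a) := by
    intro x a ha hab
    rw [hvstarfix x]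
    refine IsLeast.csInf_eq ⟨⟨a, ha, rfl⟩, ?_⟩
    rintro _ ⟨b, hb, rfl⟩
    exact hab b hb
  have hvle : ∀ x, ∀ a ∈ Adm x, vstar x ≤ h (x, a) := by
    intro x a ha
    obtain ⟨m, hm1, hm2⟩ := (hlscx x).exists_isMinOn (hAne x) (hAcomp x)
    rw [hmin x m hm1 fun b hb => hm2 hb]
    exact hm2 ha
  -- comparison
  have hcomp : ∀ f : X → A, (∀ x, f x ∈ Adm x) → ∀ u w : X → ℝ, Measurable u → Measurable w →
      WNorm W u < ⊤ → WNorm W w < ⊤ →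
      (∀ x, u x ≤ C (x, f x) + α * ∫ y, u y ∂(Q (x, f x))) →
      (∀ x, w x = C (x, f x) + α * ∫ y, w y ∂(Q (x, f x))) → ∀ x, u x ≤ w x := by
    intro f hf u w hu hw huW hwW hule hweq x
    obtain ⟨c1, hc10, hc1⟩ := wnorm_bound W u hW1 huW
    obtain ⟨c2, hc20, hc2⟩ := wnorm_bound W w hW1 hwW
    have hui := fun x => hbi u hu c1 hc1 (x, f x) (hf x)
    have hwi := fun x => hbi w hw c2 hc2 (x, f x) (hf x)
    have := contraction_nonpos W (fun x => Q (x, f x)) α β hα0 (by linarith) hγ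
      (fun x => hWi (x, f x) (hf x)) (fun x => hWb x (f x) (hf x)) (fun x => u x - w x)
      (c1 + c2) (by linarith)
      (fun x => by
        have h1 := le_of_abs_le (hc1 x)
        have h2 := neg_le_of_abs_le (hc2 x)
        show u x - w x ≤ (c1 + c2) * W x
        linarith)
      (fun x => (hui x).sub (hwi x))
      (fun x => by
        show u x - w x ≤ α * ∫ y, (u y - w y) ∂(Q (x, f x))
        rw [integral_sub (hui x) (hwi x)]
        have h1 := hule x
        have h2 := hweq x
        linarith) x
    linarith
  refine ⟨fun f _ hf Vf hVm hVW hVeq => hcomp f hf vstar Vf hvm hVm hvstarW hVW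
      (fun x => hvle x (f x) (hf x)) hVeq, fun f _ hf Vf hVm hVW hVeq => ⟨?_, fun hveq => ?_⟩, ?_⟩
  · rintro rfl
    exact hVeq
  · funext x
    exact le_antisymm
      (hcomp f hf Vf vstar hVm hvm hVW hvstarW (fun x => (hVeq x).le) hveq x)
      (hcomp f hf vstar Vf hvm hVm hvstarW hVW (fun x => (hveq x).le) hVeq x)
  · obtain ⟨h1, h2, h3⟩ := argmin_step Adm (fun x a => h (x, a)) hAcomp hAne hlscx
      (fun B hB q => (closed_sublevel Adm hAcomp hAusc h hlsc B hB q).measurableSet)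
    obtain ⟨f, hfm, hf⟩ := compact_selection _ h1 h2 h3
    exact ⟨f, hfm, fun x => (hf x).1, fun x => hmin x (f x) (hf x).1 (hf x).2⟩
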